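/- Let α_n > ⋯ > α_1 > 0 and c_1, …, c_n ∈ ℝ, and define Υ = c_n I^{α_n} + ⋯ + c_1 I^{α_1} on L¹[0,b]. Then the operator Υ + Id : L¹[0,b] → L¹[0,b] is injective: if x, y ∈ L¹[0,b] satisfy (Υ + Id)x = (Υ + Id)y almost everywhere, then x = y almost everywhere. -/

import Mathlib

open MeasureTheory Set Filter Topology

open Classical in
/-- Riemann–Liouville fractional integral of order `α` with base point `0`;
`RL 0` is the identity operator. -/
noncomputable def RL (α : ℝ) (f : ℝ → ℝ) : ℝ → ℝ := fun t =>
  if α = 0 then f t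
  else (1 / Real.Gamma α) * ∫ s in (0:ℝ)..t, (t - s) ^ (α - 1) * f s

/-!
If `z` solves the homogeneous equation `Υ z + z = 0` on `[0, b]`, then `|z| ≤ |z| ⋆ K`, where
`K u = ∑ i, |c i| * u ^ (α i - 1) / Γ (α i)`. The weight `exp (-l * t)` is multiplicative, so the
weighted `L¹` norm of a convolution of nonnegative functions is the product of their weighted norms.
That of `u ^ (α - 1) / Γ α` is `l ^ (-α)`, by the normalisation of the gamma distribution, so the
weighted norm of `z` is at most `∑ i, |c i| * l ^ (-α i)` times itself. For large `l` this factor is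
less than `1`, which forces `z = 0`.
-/

open scoped ENNReal NNReal

section Convolution

variable {G : Type*} [AddGroup G] [MeasurableSpace G] {μ : Measure G}

lemma addChar_mul_lconvolution (w : AddChar G ℝ≥0) (f g : G → ℝ≥0∞) (t : G) :
    w t * (f ⋆ₗ[μ] g) t = ((fun s => w s * f s) ⋆ₗ[μ] fun s => w s * g s) t := by
  simp only [lconvolution_def]
  rw [← lintegral_const_mul' _ _ ENNReal.coe_ne_top]
  refine lintegral_congr fun s => ?_
  have weight_split : (w t : ℝ≥0∞) = w s * w (-s + t) := by
    rw [← ENNReal.coe_mul, ← w.map_add_eq_mul, add_neg_cancel_left]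
  rw [weight_split]
  ring

variable [MeasurableAdd₂ G] [MeasurableNeg G] [SFinite μ] [μ.IsAddLeftInvariant] {f g : G → ℝ≥0∞}

lemma lintegral_lconvolution (hf : AEMeasurable f μ) (hg : AEMeasurable g μ) :
    ∫⁻ t, (f ⋆ₗ[μ] g) t ∂μ = (∫⁻ t, f t ∂μ) * ∫⁻ t, g t ∂μ := by
  simp only [lconvolution_def]
  rw [lintegral_lintegral_swap (by fun_prop), ← lintegral_mul_const'' _ hf]
  refine lintegral_congr fun s => ?_
  have hg_shift : AEMeasurable (fun t => g (-s + t)) μ :=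
    hg.comp_quasiMeasurePreserving (measurePreserving_add_left μ (-s)).quasiMeasurePreserving
  rw [lintegral_const_mul'' _ hg_shift, lintegral_add_left_eq_self]

lemma ae_eq_zero_of_ae_le_lconvolution {w : AddChar G ℝ≥0} (hw : Measurable w)
    (hf : AEMeasurable f μ) (hg : AEMeasurable g μ) (hle : f ≤ᵐ[μ] f ⋆ₗ[μ] g)
    (hf_fin : ∫⁻ t, w t * f t ∂μ ≠ ∞) (hg_lt : ∫⁻ t, w t * g t ∂μ < 1) : f =ᵐ[μ] 0 := by
  have contraction : ∫⁻ t, w t * f t ∂μ ≤ (∫⁻ t, w t * f t ∂μ) * ∫⁻ t, w t * g t ∂μ := by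
    calc ∫⁻ t, w t * f t ∂μ ≤ ∫⁻ t, w t * (f ⋆ₗ[μ] g) t ∂μ :=
          lintegral_mono_ae (hle.mono fun t ht => mul_le_mul_right ht _)
      _ = (∫⁻ t, w t * f t ∂μ) * ∫⁻ t, w t * g t ∂μ := by
          simp only [addChar_mul_lconvolution]
          exact lintegral_lconvolution (by fun_prop) (by fun_prop)
  have integral_eq_zero : ∫⁻ t, w t * f t ∂μ = 0 := by
    by_contra hne
    exact contraction.not_gt (by simpa using ENNReal.mul_lt_mul_right hne hf_fin hg_lt)
  filter_upwards [(lintegral_eq_zero_iff' (by fun_prop)).1 integral_eq_zero] with t ht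
  simpa [(w.val_isUnit t).ne_zero] using ht

end Convolution

/-- The weight `t ↦ exp (-(l * t))` of the Bielecki norm, as a character of `ℝ` with values in
`ℝ≥0`; the integral of its product with `f` is the Laplace transform of `f` at `l`. -/
noncomputable def expDecay (l : ℝ) : AddChar ℝ ℝ≥0 where
  toFun t := (Real.exp (-(l * t))).toNNReal
  map_zero_eq_one' := by simp
  map_add_eq_mul' s t := by
    rw [← Real.toNNReal_mul (Real.exp_nonneg _), ← Real.exp_add, mul_add, neg_add]

lemma coe_expDecay (l t : ℝ) : (expDecay l t : ℝ≥0∞) = ENNReal.ofReal (Real.exp (-(l * t))) := rfl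

@[fun_prop]
lemma measurable_expDecay (l : ℝ) : Measurable (expDecay l) :=
  show Measurable fun t => (Real.exp (-(l * t))).toNNReal by fun_prop

lemma expDecay_le_one {l t : ℝ} (hl : 0 ≤ l) (ht : 0 ≤ t) : expDecay l t ≤ 1 :=
  Real.toNNReal_le_one.2 (Real.exp_le_one_iff.2 (neg_nonpos.2 (mul_nonneg hl ht)))

lemma lintegral_expDecay_mul_enorm_indicator_ne_top {E : Type*} [NormedAddCommGroup E] {l b : ℝ}
    (hl : 0 ≤ l) {f : ℝ → E} (hf : IntegrableOn f (Icc 0 b)) :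
    ∫⁻ t, expDecay l t * ‖(Icc 0 b).indicator f t‖ₑ ≠ ∞ := by
  refine ((lintegral_mono fun t => ?_).trans_lt (hf.integrable_indicator measurableSet_Icc).2).ne
  by_cases ht : t ∈ Icc 0 b
  · exact mul_le_of_le_one_left' (ENNReal.coe_le_one_iff.2 (expDecay_le_one hl ht.1))
  · simp [indicator_of_notMem ht]

/-- The kernel `u ↦ u ^ (α - 1) / Γ α` of the fractional integral of order `α`, extended by zero
to `u < 0`; for `0 < α` it is nonnegative, so `ENNReal.ofReal` does not truncate it. -/
noncomputable def rlKernel (α : ℝ) : ℝ → ℝ≥0∞ :=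
  (Ici 0).indicator fun u => ENNReal.ofReal (u ^ (α - 1) / Real.Gamma α)

@[fun_prop]
lemma measurable_rlKernel (α : ℝ) : Measurable (rlKernel α) :=
  Measurable.indicator (by fun_prop) measurableSet_Ici

lemma expDecay_mul_rlKernel {α l : ℝ} (hl : 0 < l) (u : ℝ) :
    expDecay l u * rlKernel α u
      = ENNReal.ofReal (l ^ (-α)) * ProbabilityTheory.gammaPDF α l u := by
  rcases lt_or_ge u 0 with hu | hu
  · simp [rlKernel, ProbabilityTheory.gammaPDF_of_neg hu, hu]
  · rw [rlKernel, indicator_of_mem (mem_Ici.2 hu), ProbabilityTheory.gammaPDF_of_nonneg hu,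
      coe_expDecay, ← ENNReal.ofReal_mul (Real.exp_nonneg _),
      ← ENNReal.ofReal_mul (Real.rpow_nonneg hl.le _), Real.rpow_neg hl.le]
    congr 1
    field_simp [(Real.rpow_pos_of_pos hl α).ne']

lemma lintegral_expDecay_mul_rlKernel {α l : ℝ} (hα : 0 < α) (hl : 0 < l) :
    ∫⁻ u, expDecay l u * rlKernel α u = ENNReal.ofReal (l ^ (-α)) := by
  simp only [expDecay_mul_rlKernel hl]
  rw [lintegral_const_mul' _ _ ENNReal.ofReal_ne_top,
    ProbabilityTheory.lintegral_gammaPDF_eq_one hα hl, mul_one]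

lemma enorm_RL_le_lconvolution {α b t : ℝ} (hα : 0 < α) (ht : t ∈ Icc 0 b) (f : ℝ → ℝ) :
    ‖RL α f t‖ₑ ≤ ((fun s => ‖(Icc 0 b).indicator f s‖ₑ) ⋆ₗ rlKernel α) t := by
  rw [RL, if_neg hα.ne', ← intervalIntegral.integral_const_mul,
    intervalIntegral.integral_of_le ht.1, lconvolution_def]
  refine (enorm_integral_le_lintegral_enorm _).trans ?_
  rw [← lintegral_indicator measurableSet_Ioc]
  refine lintegral_mono (indicator_le fun s hs => le_of_eq ?_)
  have hs_mem : s ∈ Icc 0 b := ⟨hs.1.le, hs.2.trans ht.2⟩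
  have hts : 0 ≤ -s + t := by linarith [hs.2]
  have kernel_nonneg : 0 ≤ (-s + t) ^ (α - 1) / Real.Gamma α :=
    div_nonneg (Real.rpow_nonneg hts _) (Real.Gamma_pos_of_pos hα).le
  rw [rlKernel, indicator_of_mem hs_mem, indicator_of_mem (mem_Ici.2 hts),
    ← Real.enorm_of_nonneg kernel_nonneg, ← enorm_mul]
  congr 1
  ring_nf

lemma ae_intervalIntegrable_sub_rpow_mul {α b : ℝ} (hα : 0 < α) {f : ℝ → ℝ}
    (hf : IntegrableOn f (Icc 0 b)) :
    ∀ᵐ t ∂volume.restrict (Icc 0 b),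
      IntervalIntegrable (fun s => (t - s) ^ (α - 1) * f s) volume 0 t := by
  have hpow : IntegrableOn (fun u : ℝ => u ^ (α - 1)) (Icc 0 b) := by
    rcases le_or_gt 0 b with hb | hb
    · exact (intervalIntegrable_iff_integrableOn_Icc_of_le hb).1
        (intervalIntegral.intervalIntegrable_rpow' (by linarith))
    · simp [Icc_eq_empty hb.not_ge]
  have hconv := (hf.integrable_indicator measurableSet_Icc).ae_convolution_exists
    (ContinuousLinearMap.mul ℝ ℝ) (hpow.integrable_indicator measurableSet_Icc)
  filter_upwards [ae_restrict_of_ae hconv, ae_restrict_mem measurableSet_Icc] with t ht_conv ht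
  rw [intervalIntegrable_iff_integrableOn_Ioc_of_le ht.1]
  refine ht_conv.integrableOn.congr_fun (fun s hs => ?_) measurableSet_Ioc
  have hs_mem : s ∈ Icc 0 b := ⟨hs.1.le, hs.2.trans ht.2⟩
  have hts_mem : t - s ∈ Icc 0 b := ⟨sub_nonneg.2 hs.2, by linarith [hs.1, ht.2]⟩
  simp [indicator_of_mem hs_mem, indicator_of_mem hts_mem, mul_comm]

lemma ae_RL_sub {α b : ℝ} (hα : 0 < α) {f g : ℝ → ℝ} (hf : IntegrableOn f (Icc 0 b))
    (hg : IntegrableOn g (Icc 0 b)) :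
    ∀ᵐ t ∂volume.restrict (Icc 0 b), RL α (f - g) t = RL α f t - RL α g t := by
  filter_upwards [ae_intervalIntegrable_sub_rpow_mul hα hf,
    ae_intervalIntegrable_sub_rpow_mul hα hg] with t hft hgt
  simp only [RL, if_neg hα.ne', Pi.sub_apply, mul_sub]
  rw [intervalIntegral.integral_sub hft hgt, mul_sub]

section Upsilon

variable {ι : Type*} [Fintype ι]

/-- The kernel `K = ∑ i, |c i| * u ^ (α i - 1) / Γ (α i)` dominating
`Υ = ∑ i, c i • RL (α i)`. -/
noncomputable def upsilonKernel (α c : ι → ℝ) (u : ℝ) : ℝ≥0∞ := ∑ i, ‖c i‖ₑ * rlKernel (α i) u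

@[fun_prop]
lemma measurable_upsilonKernel (α c : ι → ℝ) : Measurable (upsilonKernel α c) := by
  unfold upsilonKernel
  fun_prop

lemma lconvolution_upsilonKernel {g : ℝ → ℝ≥0∞} (hg : AEMeasurable g) (α c : ι → ℝ) (t : ℝ) :
    (g ⋆ₗ upsilonKernel α c) t = ∑ i, ‖c i‖ₑ * (g ⋆ₗ rlKernel (α i)) t := by
  simp only [lconvolution_def, upsilonKernel, Finset.mul_sum, mul_left_comm (g _)]
  rw [lintegral_finsetSum' _ fun i _ => by fun_prop]
  simp only [lintegral_const_mul' _ _ enorm_ne_top]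

variable {α : ι → ℝ}

lemma lintegral_expDecay_mul_upsilonKernel (hα : ∀ i, 0 < α i) (c : ι → ℝ) {l : ℝ} (hl : 0 < l) :
    ∫⁻ u, expDecay l u * upsilonKernel α c u = ∑ i, ‖c i‖ₑ * ENNReal.ofReal (l ^ (-α i)) := by
  simp only [upsilonKernel, Finset.mul_sum, mul_left_comm (expDecay l _ : ℝ≥0∞)]
  rw [lintegral_finsetSum' _ fun i _ => by fun_prop]
  simp only [lintegral_const_mul' _ _ enorm_ne_top, lintegral_expDecay_mul_rlKernel (hα _) hl]

lemma exists_lintegral_expDecay_mul_upsilonKernel_lt_one (hα : ∀ i, 0 < α i) (c : ι → ℝ) :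
    ∃ l : ℝ, 0 < l ∧ ∫⁻ u, expDecay l u * upsilonKernel α c u < 1 := by
  have tendsto_zero :
      Tendsto (fun l : ℝ => ∑ i, ‖c i‖ₑ * ENNReal.ofReal (l ^ (-α i))) atTop (𝓝 0) := by
    have tendsto_term (i : ι) :
        Tendsto (fun l : ℝ => ‖c i‖ₑ * ENNReal.ofReal (l ^ (-α i))) atTop (𝓝 0) := by
      simpa using ENNReal.Tendsto.const_mul
        (ENNReal.tendsto_ofReal (tendsto_rpow_neg_atTop (hα i))) (.inr enorm_ne_top)
    simpa using tendsto_finsetSum Finset.univ fun i _ => tendsto_term i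
  obtain ⟨l, hl_lt, hl⟩ :=
    ((tendsto_zero.eventually_lt_const one_pos).and (eventually_gt_atTop 0)).exists
  exact ⟨l, hl, (lintegral_expDecay_mul_upsilonKernel hα c hl).trans_lt hl_lt⟩

lemma enorm_sum_RL_le_lconvolution (hα : ∀ i, 0 < α i) (c : ι → ℝ) {b t : ℝ} (ht : t ∈ Icc 0 b)
    {f : ℝ → ℝ} (hf : IntegrableOn f (Icc 0 b)) :
    ‖∑ i, c i * RL (α i) f t‖ₑ
      ≤ ((fun s => ‖(Icc 0 b).indicator f s‖ₑ) ⋆ₗ upsilonKernel α c) t := by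
  rw [lconvolution_upsilonKernel (hf.integrable_indicator measurableSet_Icc).1.enorm]
  refine (enorm_sum_le _ _).trans (Finset.sum_le_sum fun i _ => ?_)
  rw [enorm_mul]
  exact mul_le_mul_right (enorm_RL_le_lconvolution (hα i) ht f) _

lemma ae_eq_zero_of_sum_RL_add_self_ae_eq_zero (hα : ∀ i, 0 < α i) (c : ι → ℝ) {b : ℝ}
    {z : ℝ → ℝ} (hz : IntegrableOn z (Icc 0 b))
    (h : ∀ᵐ t ∂volume.restrict (Icc 0 b), ∑ i, c i * RL (α i) z t + z t = 0) :
    z =ᵐ[volume.restrict (Icc 0 b)] 0 := by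
  have hz_meas : AEMeasurable fun t => ‖(Icc 0 b).indicator z t‖ₑ :=
    (hz.integrable_indicator measurableSet_Icc).1.enorm
  have le_conv : (fun t => ‖(Icc 0 b).indicator z t‖ₑ)
      ≤ᵐ[volume] (fun t => ‖(Icc 0 b).indicator z t‖ₑ) ⋆ₗ upsilonKernel α c := by
    filter_upwards [(ae_restrict_iff' measurableSet_Icc).1 h] with t ht
    by_cases htb : t ∈ Icc 0 b
    · rw [indicator_of_mem htb, eq_neg_of_add_eq_zero_right (ht htb), enorm_neg]
      exact enorm_sum_RL_le_lconvolution hα c htb hz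
    · simp [indicator_of_notMem htb]
  obtain ⟨l, hl, hl_lt⟩ := exists_lintegral_expDecay_mul_upsilonKernel_lt_one hα c
  have hzero := ae_eq_zero_of_ae_le_lconvolution (measurable_expDecay l) hz_meas
    (measurable_upsilonKernel α c).aemeasurable le_conv
    (lintegral_expDecay_mul_enorm_indicator_ne_top hl.le hz) hl_lt
  filter_upwards [ae_restrict_of_ae hzero, ae_restrict_mem measurableSet_Icc] with t ht htb
  simpa [indicator_of_mem htb] using ht

end Upsilon

/-- The operator `Υ + Id`, with `Υ = c_n I^{α_n} + ⋯ + c_1 I^{α_1}`, is injective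
on `L¹[0,b]`. -/
theorem upsilon_add_id_injective (b : ℝ) (hb : 0 < b) (n : ℕ) (α c : Fin n → ℝ)
    (hmono : StrictMono α) (hpos : ∀ i, 0 < α i) (x y : ℝ → ℝ)
    (hx : IntegrableOn x (Set.Icc 0 b) volume) (hy : IntegrableOn y (Set.Icc 0 b) volume)
    (h : (fun t => (∑ i, c i * RL (α i) x t) + x t)
        =ᵐ[volume.restrict (Set.Icc 0 b)]
      (fun t => (∑ i, c i * RL (α i) y t) + y t)) :
    x =ᵐ[volume.restrict (Set.Icc 0 b)] y := by
  have RL_sub : ∀ᵐ t ∂volume.restrict (Icc 0 b), ∀ i,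
      RL (α i) (x - y) t = RL (α i) x t - RL (α i) y t :=
    ae_all_iff.2 fun i => ae_RL_sub (hpos i) hx hy
  have homogeneous : ∀ᵐ t ∂volume.restrict (Icc 0 b),
      ∑ i, c i * RL (α i) (x - y) t + (x - y) t = 0 := by
    filter_upwards [h, RL_sub] with t ht ht_sub
    simp only [ht_sub, Pi.sub_apply, mul_sub, Finset.sum_sub_distrib]
    linarith
  have hzero := ae_eq_zero_of_sum_RL_add_self_ae_eq_zero hpos c (hx.sub hy) homogeneous
  filter_upwards [hzero] with t ht using sub_eq_zero.1 ht
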